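/- arXiv:2410.12907 — 2 statements merged into one kernel-verified Lean document; each statement's English description precedes it below -/
import Mathlib

section
/- Each of the nine basic W(E8)-invariant holomorphic Jacobi forms A_1, A_2, A_3, A_4, A_5, B_2, B_3, B_4, B_6 belongs to the polynomial ring ℂ[c_0, c_1, c_2, c_3, c_4, d_0, d_2, d_3, d_4, d_5, d_6]; explicitly, one has the identities A_1 = (9/2) c_1 d_0, A_2 = (3 c_0² c_1² − 8Δ c_2)/48, B_2 = (45 c_0 c_1² d_0 + 48Δ d_2)/40, and Δ = c_0³ − 27 d_0², where Δ = (E4³ − E6²)/1728. -/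
noncomputable section

open Complex Finset

namespace E8Jacobi

/-- π as a complex number. -/
def πC : ℂ := Real.pi

/-- The E8 lattice as a subset of ℝ^8. -/
def E8Lattice : Set (Fin 8 → ℝ) :=
  {x | ((∀ i, ∃ n : ℤ, x i = n) ∨ (∀ i, ∃ n : ℤ, x i = n + 1/2)) ∧ ∃ m : ℤ, ∑ i, x i = 2 * m}

/-- Complexification of a real vector. -/
def cv (x : Fin 8 → ℝ) : Fin 8 → ℂ := fun i => (x i : ℂ)

/-- The dot product on ℝ^8. -/
def dotR (x y : Fin 8 → ℝ) : ℝ := ∑ i, x i * y i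

/-- The dot product on ℂ^8. -/
def dotC (z w : Fin 8 → ℂ) : ℂ := ∑ i, z i * w i

/-- The Weyl group W(E8): orthogonal matrices preserving the E8 lattice. -/
def WeylE8 : Set (Matrix (Fin 8) (Fin 8) ℝ) :=
  {M | (∀ x y, dotR (M.mulVec x) (M.mulVec y) = dotR x y) ∧
       (∀ x ∈ E8Lattice, M.mulVec x ∈ E8Lattice) ∧
       (∀ x ∈ E8Lattice, ∃ y ∈ E8Lattice, M.mulVec y = x)}

/-- The complexified (ℂ-linear) action of a real matrix on ℂ^8. -/
def actC (M : Matrix (Fin 8) (Fin 8) ℝ) (z : Fin 8 → ℂ) : Fin 8 → ℂ :=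
  fun i => ∑ j, (M i j : ℂ) * z j

/-- A W(E8)-invariant weak Jacobi form of weight `k` and index `m`. -/
structure IsWeakJacobiFormE8 (k : ℤ) (m : ℕ) (φ : ℂ → (Fin 8 → ℂ) → ℂ) : Prop where
  holo : DifferentiableOn ℂ (fun p : ℂ × (Fin 8 → ℂ) => φ p.1 p.2) {p | 0 < p.1.im}
  weyl_inv : ∀ M ∈ WeylE8, ∀ τ : ℂ, 0 < τ.im → ∀ z, φ τ (actC M z) = φ τ z
  quasi_periodic : ∀ α ∈ E8Lattice, ∀ β ∈ E8Lattice, ∀ τ : ℂ, 0 < τ.im → ∀ z,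
    φ τ (fun i => z i + τ * (α i : ℂ) + (β i : ℂ)) =
      Complex.exp (-(m : ℂ) * πC * I * (τ * dotC (cv α) (cv α) + 2 * dotC z (cv α))) * φ τ z
  modular : ∀ a b c d : ℤ, a * d - b * c = 1 → ∀ τ : ℂ, 0 < τ.im → ∀ z,
    φ (((a : ℂ) * τ + (b : ℂ)) / ((c : ℂ) * τ + (d : ℂ))) (fun i => z i / ((c : ℂ) * τ + (d : ℂ))) =
      ((c : ℂ) * τ + (d : ℂ)) ^ k *
        Complex.exp ((m : ℂ) * πC * I * (c : ℂ) / ((c : ℂ) * τ + (d : ℂ)) * dotC z z) * φ τ z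
  fourier : ∃ co : ℕ → E8Lattice → ℂ, ∀ τ : ℂ, 0 < τ.im → ∀ z,
    φ τ z = ∑' (n : ℕ) (w : E8Lattice), co n w *
      Complex.exp (2 * πC * I * dotC (cv w.1) z) * Complex.exp (2 * πC * I * τ) ^ n

/-- Membership in the ring J^{E8}_{*,*} of W(E8)-invariant weak Jacobi forms:
a finite sum of weak Jacobi forms of various weights and indices. -/
def MemJE8 (φ : ℂ → (Fin 8 → ℂ) → ℂ) : Prop :=
  ∃ (n : ℕ) (k : Fin n → ℤ) (m : Fin n → ℕ) (ψ : Fin n → ℂ → (Fin 8 → ℂ) → ℂ),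
    (∀ i, IsWeakJacobiFormE8 (k i) (m i) (ψ i)) ∧
    ∀ τ : ℂ, 0 < τ.im → ∀ z, φ τ z = ∑ i, ψ i τ z

/-- The nome q = e^{2πiτ}. -/
def qExp (τ : ℂ) : ℂ := Complex.exp (2 * πC * I * τ)

/-- The Eisenstein series E4. -/
def E4 (τ : ℂ) : ℂ :=
  1 + 240 * ∑' n : ℕ+, (n : ℂ) ^ 3 * qExp τ ^ (n : ℕ) / (1 - qExp τ ^ (n : ℕ))

/-- The Eisenstein series E6. -/
def E6 (τ : ℂ) : ℂ :=
  1 - 504 * ∑' n : ℕ+, (n : ℂ) ^ 5 * qExp τ ^ (n : ℕ) / (1 - qExp τ ^ (n : ℕ))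

/-- The modular discriminant Δ. -/
def Dl (τ : ℂ) : ℂ := (E4 τ ^ 3 - E6 τ ^ 2) / 1728

/-- The Dedekind eta function. -/
def etaF (τ : ℂ) : ℂ := Complex.exp (2 * πC * I * τ / 24) * ∏' n : ℕ, (1 - qExp τ ^ (n + 1))

/-- The theta function of the E8 lattice. -/
def Theta (τ : ℂ) (z : Fin 8 → ℂ) : ℂ :=
  ∑' w : E8Lattice, Complex.exp (πC * I * τ * dotC (cv w.1) (cv w.1) + 2 * πC * I * dotC z (cv w.1))

/-- The Jacobi theta function θ1. -/
def th1 (z τ : ℂ) : ℂ :=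
  I * ∑' n : ℤ, (-1 : ℂ) ^ n * Complex.exp (2 * πC * I * z * ((n : ℂ) - 1/2)) *
    Complex.exp (πC * I * τ * ((n : ℂ) - 1/2) ^ 2)

/-- The Jacobi theta function θ2. -/
def th2 (z τ : ℂ) : ℂ :=
  ∑' n : ℤ, Complex.exp (2 * πC * I * z * ((n : ℂ) - 1/2)) *
    Complex.exp (πC * I * τ * ((n : ℂ) - 1/2) ^ 2)

/-- The Jacobi theta function θ3. -/
def th3 (z τ : ℂ) : ℂ :=
  ∑' n : ℤ, Complex.exp (2 * πC * I * z * (n : ℂ)) * Complex.exp (πC * I * τ * (n : ℂ) ^ 2)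

/-- The Jacobi theta function θ4. -/
def th4 (z τ : ℂ) : ℂ :=
  ∑' n : ℤ, (-1 : ℂ) ^ n * Complex.exp (2 * πC * I * z * (n : ℂ)) *
    Complex.exp (πC * I * τ * (n : ℂ) ^ 2)

/-- A1 = Θ(τ,z). -/
def A1 (τ : ℂ) (z : Fin 8 → ℂ) : ℂ := Theta τ z

/-- A_m for m = 2, 3, 5. -/
def AM (m : ℕ) (τ : ℂ) (z : Fin 8 → ℂ) : ℂ :=
  ((m : ℂ) ^ 3 / ((m : ℂ) ^ 3 + 1)) *
    (Theta ((m : ℂ) * τ) (fun i => (m : ℂ) * z i) +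
      ((m : ℂ) ^ 4)⁻¹ * ∑ k ∈ Finset.range m, Theta ((τ + (k : ℂ)) / (m : ℂ)) z)

def A2 : ℂ → (Fin 8 → ℂ) → ℂ := AM 2
def A3 : ℂ → (Fin 8 → ℂ) → ℂ := AM 3
def A5 : ℂ → (Fin 8 → ℂ) → ℂ := AM 5

/-- A4 = Θ(τ,2z). -/
def A4 (τ : ℂ) (z : Fin 8 → ℂ) : ℂ := Theta τ (fun i => 2 * z i)

def ee1 (τ : ℂ) : ℂ := (th3 0 τ ^ 4 + th4 0 τ ^ 4) / 12
def ee2 (τ : ℂ) : ℂ := (th2 0 τ ^ 4 - th4 0 τ ^ 4) / 12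
def ee3 (τ : ℂ) : ℂ := (-th2 0 τ ^ 4 - th3 0 τ ^ 4) / 12
def h0 (τ : ℂ) : ℂ := th3 0 (2*τ) * th3 0 (6*τ) + th2 0 (2*τ) * th2 0 (6*τ)

def B2 (τ : ℂ) (z : Fin 8 → ℂ) : ℂ :=
  (32/5) * (ee1 τ * Theta (2*τ) (fun i => 2 * z i)
    + (1/2^4) * ee3 τ * Theta (τ/2) z + (1/2^4) * ee2 τ * Theta ((τ+1)/2) z)

def B3 (τ : ℂ) (z : Fin 8 → ℂ) : ℂ :=
  (81/80) * (h0 τ ^ 2 * Theta (3*τ) (fun i => 3 * z i)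
    - (1/3^5) * ∑ k ∈ Finset.range 3, h0 ((τ + (k:ℂ))/3) ^ 2 * Theta ((τ + (k:ℂ))/3) z)

def B4 (τ : ℂ) (z : Fin 8 → ℂ) : ℂ :=
  (16/15) * (th4 0 (2*τ) ^ 4 * Theta (4*τ) (fun i => 4 * z i)
    - (1/2^4) * th4 0 (2*τ) ^ 4 * Theta (τ + 1/2) (fun i => 2 * z i)
    - (1/(2^2 * 4^4)) * ∑ k ∈ Finset.range 4, th2 0 ((τ + (k:ℂ))/2) ^ 4 * Theta ((τ + (k:ℂ))/4) z)

def B6 (τ : ℂ) (z : Fin 8 → ℂ) : ℂ :=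
  (9/10) * (h0 τ ^ 2 * Theta (6*τ) (fun i => 6 * z i)
    + (1/2^4) * ∑ k ∈ Finset.range 2, h0 (τ + (k:ℂ)) ^ 2 * Theta ((3*τ + 3*(k:ℂ))/2) (fun i => 3 * z i)
    - (1/(3 * 3^4)) * ∑ k ∈ Finset.range 3, h0 ((τ + (k:ℂ))/3) ^ 2 * Theta ((2*τ + 2*(k:ℂ))/3) (fun i => 2 * z i)
    - (1/(3 * 6^4)) * ∑ k ∈ Finset.range 6, h0 ((τ + (k:ℂ))/3) ^ 2 * Theta ((τ + (k:ℂ))/6) z)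

/-- The nine basic W(E8)-invariant holomorphic Jacobi forms A1,…,A5,B2,…,B6. -/
def nineForms : Fin 9 → ℂ → (Fin 8 → ℂ) → ℂ := ![A1, A2, A3, A4, A5, B2, B3, B4, B6]

/- The basic meromorphic Jacobi forms a_i, b_j (Appendix A of the paper). -/

def a0f (τ : ℂ) (_z : Fin 8 → ℂ) : ℂ := E4 τ / 12

def a2f (τ : ℂ) (z : Fin 8 → ℂ) : ℂ :=
  6 / (E4 τ * Dl τ) * (-(E4 τ) * A2 τ z + A1 τ z ^ 2)

def a3f (τ : ℂ) (z : Fin 8 → ℂ) : ℂ :=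
  1 / (9 * E4 τ ^ 2 * Dl τ ^ 2) *
    (-7 * E4 τ ^ 2 * E6 τ * A3 τ z - 20 * E4 τ ^ 3 * B3 τ z
      - 9 * E4 τ * E6 τ * A1 τ z * A2 τ z + 30 * E4 τ ^ 2 * A1 τ z * B2 τ z
      + 6 * E6 τ * A1 τ z ^ 3)

def a4f (τ : ℂ) (z : Fin 8 → ℂ) : ℂ :=
  1 / (288 * E4 τ ^ 3 * Dl τ ^ 3) *
    (576 * E4 τ ^ 3 * Dl τ * A4 τ z + 32256 * E4 τ ^ 2 * Dl τ * A1 τ z * A3 τ z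
      - 9 * E4 τ ^ 5 * A2 τ z ^ 2 - 30 * E4 τ ^ 3 * E6 τ * A2 τ z * B2 τ z
      - 25 * E4 τ ^ 4 * B2 τ z ^ 2
      + (60 * E4 τ ^ 4 - 12 * E4 τ * E6 τ ^ 2) * A1 τ z ^ 2 * A2 τ z
      + 80 * E4 τ ^ 2 * E6 τ * A1 τ z ^ 2 * B2 τ z
      + (-70 * E4 τ ^ 3 + 6 * E6 τ ^ 2) * A1 τ z ^ 4)

def b0f (τ : ℂ) (_z : Fin 8 → ℂ) : ℂ := E6 τ / 216

def b1f (τ : ℂ) (z : Fin 8 → ℂ) : ℂ := -4 / E4 τ * A1 τ z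

def b2f (τ : ℂ) (z : Fin 8 → ℂ) : ℂ :=
  5 / (6 * E4 τ ^ 2 * Dl τ) * (E4 τ ^ 2 * B2 τ z - E6 τ * A1 τ z ^ 2)

def b3f (τ : ℂ) (z : Fin 8 → ℂ) : ℂ :=
  1 / (108 * E4 τ ^ 3 * Dl τ ^ 2) *
    (-7 * E4 τ ^ 5 * A3 τ z - 20 * E4 τ ^ 3 * E6 τ * B3 τ z
      - 9 * E4 τ ^ 4 * A1 τ z * A2 τ z + 30 * E4 τ ^ 2 * E6 τ * A1 τ z * B2 τ z
      + (16 * E4 τ ^ 3 - 10 * E6 τ ^ 2) * A1 τ z ^ 3)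

def b4f (τ : ℂ) (z : Fin 8 → ℂ) : ℂ :=
  1 / (1728 * E4 τ ^ 4 * Dl τ ^ 3) *
    (-8640 * E4 τ ^ 4 * Dl τ * B4 τ z + 138240 * E4 τ ^ 3 * Dl τ * A1 τ z * B3 τ z
      + 9 * E4 τ ^ 5 * E6 τ * A2 τ z ^ 2 + 30 * E4 τ ^ 6 * A2 τ z * B2 τ z
      + 25 * E4 τ ^ 4 * E6 τ * B2 τ z ^ 2
      - 48 * E4 τ ^ 4 * E6 τ * A1 τ z ^ 2 * A2 τ z
      + (-140 * E4 τ ^ 5 + 60 * E4 τ ^ 2 * E6 τ ^ 2) * A1 τ z ^ 2 * B2 τ z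
      + (74 * E4 τ ^ 3 * E6 τ - 10 * E6 τ ^ 3) * A1 τ z ^ 4)

def b5f (τ : ℂ) (z : Fin 8 → ℂ) : ℂ :=
  1 / (72 * E4 τ ^ 5 * Dl τ ^ 3) *
    (-36288 * E4 τ ^ 4 * Dl τ * A5 τ z - 294 * E4 τ ^ 6 * A2 τ z * A3 τ z
      - 770 * E4 τ ^ 4 * E6 τ * B2 τ z * A3 τ z - 840 * E4 τ ^ 4 * E6 τ * A2 τ z * B3 τ z
      - 2200 * E4 τ ^ 5 * B2 τ z * B3 τ z + 168 * E4 τ ^ 5 * A1 τ z ^ 2 * A3 τ z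
      + 480 * E4 τ ^ 3 * E6 τ * A1 τ z ^ 2 * B3 τ z - 621 * E4 τ ^ 5 * A1 τ z * A2 τ z ^ 2
      + 3525 * E4 τ ^ 4 * A1 τ z * B2 τ z ^ 2 + 1224 * E4 τ ^ 4 * A1 τ z ^ 3 * A2 τ z
      - 240 * E4 τ ^ 2 * E6 τ * A1 τ z ^ 3 * B2 τ z
      + (-456 * E4 τ ^ 3 + 24 * E6 τ ^ 2) * A1 τ z ^ 5)

def b6f (τ : ℂ) (z : Fin 8 → ℂ) : ℂ :=
  1 / (4478976 * E4 τ ^ 6 * Dl τ ^ 5) *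
    (-19906560 * E4 τ ^ 6 * Dl τ ^ 2 * B6 τ z
      - 188116992 * E4 τ ^ 4 * E6 τ * Dl τ ^ 2 * A1 τ z * A5 τ z
      - 5184 * E4 τ ^ 7 * E6 τ * Dl τ * A2 τ z * A4 τ z
      - 8640 * E4 τ ^ 8 * Dl τ * B2 τ z * A4 τ z
      - 103680 * E4 τ ^ 8 * Dl τ * A2 τ z * B4 τ z
      - 172800 * E4 τ ^ 6 * E6 τ * Dl τ * B2 τ z * B4 τ z
      + 12672 * E4 τ ^ 6 * E6 τ * Dl τ * A1 τ z ^ 2 * A4 τ z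
      + 17280 * (5 * E4 τ ^ 7 + 9 * E4 τ ^ 4 * E6 τ ^ 2) * Dl τ * A1 τ z ^ 2 * B4 τ z
      + 112896 * E4 τ ^ 7 * E6 τ * Dl τ * A3 τ z ^ 2
      + 645120 * E4 τ ^ 8 * Dl τ * A3 τ z * B3 τ z
      + 921600 * E4 τ ^ 6 * E6 τ * Dl τ * B3 τ z ^ 2
      - 1717632 * E4 τ ^ 6 * E6 τ * Dl τ * A1 τ z * A2 τ z * A3 τ z
      - 362880 * (4 * E4 τ ^ 7 + 11 * E4 τ ^ 4 * E6 τ ^ 2) * Dl τ * A1 τ z * B2 τ z * A3 τ z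
      + 483840 * (4 * E4 τ ^ 7 - 9 * E4 τ ^ 4 * E6 τ ^ 2) * Dl τ * A1 τ z * A2 τ z * B3 τ z
      - 11404800 * E4 τ ^ 5 * E6 τ * Dl τ * A1 τ z * B2 τ z * B3 τ z
      + 1161216 * E4 τ ^ 5 * E6 τ * Dl τ * A1 τ z ^ 3 * A3 τ z
      - 92160 * (37 * E4 τ ^ 6 - 9 * E4 τ ^ 3 * E6 τ ^ 2) * Dl τ * A1 τ z ^ 3 * B3 τ z
      + (135 * E4 τ ^ 9 * E6 τ + 54 * E4 τ ^ 6 * E6 τ ^ 3) * A2 τ z ^ 3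
      + (405 * E4 τ ^ 10 + 540 * E4 τ ^ 7 * E6 τ ^ 2) * A2 τ z ^ 2 * B2 τ z
      + 1575 * E4 τ ^ 8 * E6 τ * A2 τ z * B2 τ z ^ 2
      + (375 * E4 τ ^ 9 + 500 * E4 τ ^ 6 * E6 τ ^ 2) * B2 τ z ^ 3
      + (-3159 * E4 τ ^ 8 * E6 τ + 1701 * E4 τ ^ 5 * E6 τ ^ 3) * A1 τ z ^ 2 * A2 τ z ^ 2
      + (-3060 * E4 τ ^ 9 - 1800 * E4 τ ^ 6 * E6 τ ^ 2) * A1 τ z ^ 2 * A2 τ z * B2 τ z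
      + (6975 * E4 τ ^ 7 * E6 τ - 11025 * E4 τ ^ 4 * E6 τ ^ 3) * A1 τ z ^ 2 * B2 τ z ^ 2
      + (6768 * E4 τ ^ 7 * E6 τ - 3024 * E4 τ ^ 4 * E6 τ ^ 3) * A1 τ z ^ 4 * A2 τ z
      + (4260 * E4 τ ^ 8 + 1800 * E4 τ ^ 5 * E6 τ ^ 2 + 180 * E4 τ ^ 2 * E6 τ ^ 4) * A1 τ z ^ 4 * B2 τ z
      + (-3692 * E4 τ ^ 6 * E6 τ + 504 * E4 τ ^ 3 * E6 τ ^ 3 - 12 * E6 τ ^ 5) * A1 τ z ^ 6)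

/-- The Seiberg–Witten coefficients a_0, …, a_4 (a_1 = 0). -/
def aSW : ℕ → ℂ → (Fin 8 → ℂ) → ℂ
  | 0 => a0f
  | 2 => a2f
  | 3 => a3f
  | 4 => a4f
  | _ => fun _ _ => 0

/-- The Seiberg–Witten coefficients b_0, …, b_6. -/
def bSW : ℕ → ℂ → (Fin 8 → ℂ) → ℂ
  | 0 => b0f
  | 1 => b1f
  | 2 => b2f
  | 3 => b3f
  | 4 => b4f
  | 5 => b5f
  | 6 => b6f
  | _ => fun _ _ => 0

/-- The translation parameter −b₁/(6b₀). -/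
def uShift (τ : ℂ) (z : Fin 8 → ℂ) : ℂ := -(bSW 1 τ z) / (6 * bSW 0 τ z)

/-- The coefficients c_i. -/
def cSW (i : ℕ) (τ : ℂ) (z : Fin 8 → ℂ) : ℂ :=
  ∑ j ∈ Finset.range (i+1), aSW j τ z * (Nat.choose (4-j) (4-i) : ℂ) * uShift τ z ^ (i-j)

/-- The coefficients d_j. -/
def dSW (j : ℕ) (τ : ℂ) (z : Fin 8 → ℂ) : ℂ :=
  ∑ l ∈ Finset.range (j+1), bSW l τ z * (Nat.choose (6-l) (6-j) : ℂ) * uShift τ z ^ (j-l)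

/-- Points of the upper half-plane avoiding the zeros of E4, E6 and Δ
(where all the meromorphic Jacobi forms above are defined). -/
def GoodTau (τ : ℂ) : Prop := 0 < τ.im ∧ E4 τ ≠ 0 ∧ E6 τ ≠ 0 ∧ Dl τ ≠ 0

/-- The eleven generators a_0, a_2, a_3, a_4, b_0, …, b_6 of R. -/
def abGens : Fin 11 → ℂ → (Fin 8 → ℂ) → ℂ :=
  ![aSW 0, aSW 2, aSW 3, aSW 4, bSW 0, bSW 1, bSW 2, bSW 3, bSW 4, bSW 5, bSW 6]

/-- The eleven generators c_0, …, c_4, d_0, d_2, …, d_6 of R̃. -/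
def cdGens : Fin 11 → ℂ → (Fin 8 → ℂ) → ℂ :=
  ![cSW 0, cSW 1, cSW 2, cSW 3, cSW 4, dSW 0, dSW 2, dSW 3, dSW 4, dSW 5, dSW 6]

/-- Membership in the polynomial ring R = ℂ[a_0,a_2,a_3,a_4,b_0,…,b_6]
(as meromorphic functions on ℍ × ℂ^8). -/
def MemR (φ : ℂ → (Fin 8 → ℂ) → ℂ) : Prop :=
  ∃ P : MvPolynomial (Fin 11) ℂ, ∀ τ : ℂ, GoodTau τ → ∀ z,
    φ τ z = MvPolynomial.eval (fun i => abGens i τ z) P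

/-- Membership in the polynomial ring R̃ = ℂ[c_0,…,c_4,d_0,d_2,…,d_6]
(as meromorphic functions on ℍ × ℂ^8). -/
def MemRt (φ : ℂ → (Fin 8 → ℂ) → ℂ) : Prop :=
  ∃ P : MvPolynomial (Fin 11) ℂ, ∀ τ : ℂ, GoodTau τ → ∀ z,
    φ τ z = MvPolynomial.eval (fun i => cdGens i τ z) P

/- Invariant theory of binary forms. -/

/-- `BinTrans n T α α'` says that `α'` is the coefficient family of the degree-`n`
binary form with coefficients `α` transformed by `T ∈ SL2(ℂ)`. -/
def BinTrans (n : ℕ) (T : Matrix (Fin 2) (Fin 2) ℂ) (α α' : ℕ → ℂ) : Prop :=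
  ∀ u v : ℂ,
    ∑ j ∈ Finset.range (n+1), α' j * u ^ (n - j) * v ^ j
      = ∑ i ∈ Finset.range (n+1), α i * (T 0 0 * u + T 0 1 * v) ^ (n - i) *
          (T 1 0 * u + T 1 1 * v) ^ i

/-- Variables for polynomials in the coefficients of a binary quartic and sextic. -/
abbrev SV := Fin 5 ⊕ Fin 7

/-- Evaluation of a polynomial in the coefficients of the quartic and sextic. -/
def evalSV (Φ : MvPolynomial SV ℂ) (α β : ℕ → ℂ) : ℂ :=
  MvPolynomial.eval (Sum.elim (fun i : Fin 5 => α i.1) (fun j : Fin 7 => β j.1)) Φ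

/-- Membership in the ring of joint semiinvariants ℂ[V4 ⊕ V6]^{U2(ℂ)}. -/
def IsSemiinvRingElem (Φ : MvPolynomial SV ℂ) : Prop :=
  ∀ κ : ℂ, ∀ α α' β β' : ℕ → ℂ,
    BinTrans 4 !![1, κ; 0, 1] α α' → BinTrans 6 !![1, κ; 0, 1] β β' →
      evalSV Φ α' β' = evalSV Φ α β

/-- Membership in the ring of joint invariants ℂ[V4 ⊕ V6]^{SL2(ℂ)}. -/
def IsInvRingElem (Φ : MvPolynomial SV ℂ) : Prop :=
  ∀ T : Matrix (Fin 2) (Fin 2) ℂ, T.det = 1 → ∀ α α' β β' : ℕ → ℂ,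
    BinTrans 4 T α α' → BinTrans 6 T β β' → evalSV Φ α' β' = evalSV Φ α β

/-- Variables for joint covariants: coefficients of the two forms together with (u,v). -/
abbrev CVV := (Fin 5 ⊕ Fin 7) ⊕ Fin 2

/-- Evaluation of a polynomial in the coefficients and (u,v). -/
def evalCov (Ψ : MvPolynomial CVV ℂ) (α β : ℕ → ℂ) (u v : ℂ) : ℂ :=
  MvPolynomial.eval
    (Sum.elim (Sum.elim (fun i : Fin 5 => α i.1) (fun j : Fin 7 => β j.1))
      (fun p : Fin 2 => if p = 0 then u else v)) Ψ

/-- Membership in the ring of joint covariants ℂ[V4 ⊕ V6 ⊕ ℂ²]^{SL2(ℂ)}. -/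
def IsCovRingElem (Ψ : MvPolynomial CVV ℂ) : Prop :=
  ∀ T : Matrix (Fin 2) (Fin 2) ℂ, T.det = 1 → ∀ α α' β β' : ℕ → ℂ,
    BinTrans 4 T α α' → BinTrans 6 T β β' → ∀ u v : ℂ,
      evalCov Ψ α' β' u v = evalCov Ψ α β (T 0 0 * u + T 0 1 * v) (T 1 0 * u + T 1 1 * v)

/-- â_i in ℂ[α, β, α₀⁻¹]. -/
def ahat (α : ℕ → ℂ) (i : ℕ) : ℂ :=
  ∑ j ∈ Finset.range (i+1), α j * (Nat.choose (4-j) (4-i) : ℂ) * (-(α 1)/(4 * α 0)) ^ (i-j)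

/-- b̂_i in ℂ[α, β, α₀⁻¹]. -/
def bhat (α β : ℕ → ℂ) (i : ℕ) : ℂ :=
  ∑ j ∈ Finset.range (i+1), β j * (Nat.choose (6-j) (6-i) : ℂ) * (-(α 1)/(4 * α 0)) ^ (i-j)

/-- ĉ_i in ℂ[α, β, β₀⁻¹]. -/
def chat (α β : ℕ → ℂ) (i : ℕ) : ℂ :=
  ∑ j ∈ Finset.range (i+1), α j * (Nat.choose (4-j) (4-i) : ℂ) * (-(β 1)/(6 * β 0)) ^ (i-j)

/-- d̂_i in ℂ[α, β, β₀⁻¹]. -/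
def dhat (β : ℕ → ℂ) (i : ℕ) : ℂ :=
  ∑ j ∈ Finset.range (i+1), β j * (Nat.choose (6-j) (6-i) : ℂ) * (-(β 1)/(6 * β 0)) ^ (i-j)

/-- The images of the eleven generators of R under ψ. -/
def hatGens (α β : ℕ → ℂ) : Fin 11 → ℂ :=
  ![ahat α 0, ahat α 2, ahat α 3, ahat α 4, bhat α β 0, bhat α β 1, bhat α β 2,
    bhat α β 3, bhat α β 4, bhat α β 5, bhat α β 6]

/-- The images of the eleven generators of R̃ under ψ̃. -/
def cdhatGens (α β : ℕ → ℂ) : Fin 11 → ℂ :=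
  ![chat α β 0, chat α β 1, chat α β 2, chat α β 3, chat α β 4, dhat β 0, dhat β 2,
    dhat β 3, dhat β 4, dhat β 5, dhat β 6]

/-- Weights picking out the a-variables among the eleven generators. -/
def wA : Fin 11 → ℕ := ![1, 1, 1, 1, 0, 0, 0, 0, 0, 0, 0]

/-- Weights picking out the b-variables among the eleven generators. -/
def wB : Fin 11 → ℕ := ![0, 0, 0, 0, 1, 1, 1, 1, 1, 1, 1]

/-- Weights picking out the α-variables. -/
def wSVα : SV → ℕ := Sum.elim (fun _ => 1) (fun _ => 0)

/-- Weights picking out the β-variables. -/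
def wSVβ : SV → ℕ := Sum.elim (fun _ => 0) (fun _ => 1)

/-- A joint semiinvariant of the quartic and sextic, of degrees (da, db) and order ω. -/
def IsSemiinvOf (Φ : MvPolynomial SV ℂ) (da db : ℕ) (ω : ℤ) : Prop :=
  MvPolynomial.IsWeightedHomogeneous wSVα Φ da ∧
  MvPolynomial.IsWeightedHomogeneous wSVβ Φ db ∧
  IsSemiinvRingElem Φ ∧
  ∀ l : ℂ, l ≠ 0 → ∀ α α' β β' : ℕ → ℂ,
    BinTrans 4 !![l, 0; 0, l⁻¹] α α' → BinTrans 6 !![l, 0; 0, l⁻¹] β β' →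
      evalSV Φ α' β' = l ^ ω * evalSV Φ α β

/-- Substitution α_i ↦ a_i (with a_1 = 0), β_j ↦ b_j into a polynomial in (α, β). -/
def subAB (Φ : MvPolynomial SV ℂ) : ℂ → (Fin 8 → ℂ) → ℂ :=
  fun τ z => MvPolynomial.eval
    (Sum.elim (fun i : Fin 5 => aSW i.1 τ z) (fun j : Fin 7 => bSW j.1 τ z)) Φ

/-- The graph of the map ψ_J : a Jacobi form φ = Q(a_i, b_j) is sent to the
polynomial Φ = Q(â_i, b̂_j). -/
def PsiJRel (φ : ℂ → (Fin 8 → ℂ) → ℂ) (Φ : MvPolynomial SV ℂ) : Prop :=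
  ∃ Q : MvPolynomial (Fin 11) ℂ,
    (∀ τ : ℂ, GoodTau τ → ∀ z, φ τ z = MvPolynomial.eval (fun i => abGens i τ z) Q) ∧
    (∀ α β : ℕ → ℂ, α 0 ≠ 0 → evalSV Φ α β = MvPolynomial.eval (hatGens α β) Q)

/-!
The `c_i`, `d_j` are the coefficients of the curve after the translation by `t = -b₁/(6b₀)`, so the
`a_i`, `b_j` are recovered from them by the translation by `-t`. As `a₁ = 0`, one has `c₁ = 4c₀t`;
moreover `E4 = 12c₀` and `E6 = 216d₀`. Read through these substitutions, the formulas of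
Appendix A are a system for the nine forms that can be solved for one form at a time: each equation
is linear in the new form, with leading coefficient a constant times a product of powers of `E4`
and `Δ`. In every solution the powers of `c₀` introduced by `t = c₁/(4c₀)` and by this leading
coefficient cancel, and so do the powers of `Δ`, which leaves a polynomial.
-/

section Translation

variable {R : Type*}

/-- The coefficients of `f(u + t)`, where `f(u) = a₀uⁿ + a₁uⁿ⁻¹ + ⋯ + aₙ`. Coefficients are indexed
from the top one, so only the indices `i ≤ n` are meaningful. -/
def translate [CommSemiring R] (n : ℕ) (t : R) (a : ℕ → R) (i : ℕ) : R :=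
  ∑ j ∈ range (i + 1), a j * (Nat.choose (n - j) (n - i) : R) * t ^ (i - j)

theorem translate_zero [CommSemiring R] (n : ℕ) (a : ℕ → R) (i : ℕ) :
    translate n 0 a i = a i := by
  rw [translate, sum_eq_single_of_mem i (by simp)]
  · simp
  · intro j hj hji
    have hij : i - j ≠ 0 := by grind
    simp [hij]

theorem choose_sub_mul_choose_sub {n i j m : ℕ} (hi : i ≤ n) (hm : j + m ≤ i) :
    (n - j).choose (n - (j + m)) * (n - (j + m)).choose (n - i) =
      (n - j).choose (n - i) * (i - j).choose m := by
  have h₁ : n - j - (n - i) = i - j := by lia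
  have h₂ : n - (j + m) - (n - i) = i - j - m := by lia
  rw [Nat.choose_mul (by lia), h₁, h₂, Nat.choose_symm (by lia)]

theorem translate_translate [CommSemiring R] (s t : R) (a : ℕ → R) {n i : ℕ} (hi : i ≤ n) :
    translate n s (translate n t a) i = translate n (t + s) a i := by
  calc translate n s (translate n t a) i
      = ∑ k ∈ range (i + 1), ∑ j ∈ range (k + 1), a j * (Nat.choose (n - j) (n - (j + (k - j))) : R)
          * t ^ (k - j) * ((Nat.choose (n - (j + (k - j))) (n - i) : R)
          * s ^ (i - (j + (k - j)))) := by
        simp only [translate, sum_mul]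
        refine sum_congr rfl fun k _ => sum_congr rfl fun j hj => ?_
        rw [Nat.add_sub_cancel' (by grind), mul_assoc _ _ (s ^ _)]
    _ = ∑ j ∈ range (i + 1), ∑ m ∈ range (i + 1 - j), a j * (Nat.choose (n - j) (n - (j + m)) : R)
          * t ^ m * ((Nat.choose (n - (j + m)) (n - i) : R) * s ^ (i - (j + m))) :=
        sum_range_diag_flip (i + 1) fun j m => a j * (Nat.choose (n - j) (n - (j + m)) : R)
          * t ^ m * ((Nat.choose (n - (j + m)) (n - i) : R) * s ^ (i - (j + m)))
    _ = translate n (t + s) a i := by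
        refine sum_congr rfl fun j hj => ?_
        have hj : j ≤ i := by grind
        rw [add_pow, mul_sum, Nat.sub_add_comm hj]
        refine sum_congr rfl fun m hm => ?_
        have hchoose := congrArg (Nat.cast (R := R))
          (choose_sub_mul_choose_sub hi (j := j) (m := m) (by grind))
        push_cast at hchoose
        calc a j * (Nat.choose (n - j) (n - (j + m)) : R) * t ^ m
              * ((Nat.choose (n - (j + m)) (n - i) : R) * s ^ (i - (j + m)))
            = a j * t ^ m * s ^ (i - (j + m))
              * (Nat.choose (n - j) (n - (j + m)) * Nat.choose (n - (j + m)) (n - i)) := by ring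
          _ = a j * (Nat.choose (n - j) (n - i) : R)
              * (t ^ m * s ^ (i - j - m) * (Nat.choose (i - j) m : R)) := by
              rw [hchoose, Nat.sub_add_eq]
              ring

theorem translate_neg_translate [CommRing R] (t : R) (a : ℕ → R) {n i : ℕ} (hi : i ≤ n) :
    translate n (-t) (translate n t a) i = a i := by
  rw [translate_translate _ _ _ hi, add_neg_cancel, translate_zero]

end Translation

section Coefficients

variable {τ : ℂ} (z : Fin 8 → ℂ)

local notation "Δ" => Dl τ
local notation "t" => uShift τ z
local notation "c₀" => cSW 0 τ z
local notation "c₁" => cSW 1 τ z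
local notation "c₂" => cSW 2 τ z
local notation "c₃" => cSW 3 τ z
local notation "c₄" => cSW 4 τ z
local notation "d₀" => dSW 0 τ z
local notation "d₂" => dSW 2 τ z
local notation "d₃" => dSW 3 τ z
local notation "d₄" => dSW 4 τ z
local notation "d₅" => dSW 5 τ z
local notation "d₆" => dSW 6 τ z

theorem E4_eq_cSW_zero : E4 τ = 12 * c₀ := by
  simp [cSW, aSW, a0f, mul_div_cancel₀]

theorem E6_eq_dSW_zero : E6 τ = 216 * d₀ := by
  simp [dSW, bSW, b0f, mul_div_cancel₀]

theorem Dl_eq_cSW_dSW : Δ = c₀ ^ 3 - 27 * d₀ ^ 2 := by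
  rw [Dl, E4_eq_cSW_zero z, E6_eq_dSW_zero z]
  ring

theorem cSW_one : c₁ = 4 * c₀ * t := by
  simp [cSW, aSW, sum_range_succ, mul_comm]

theorem dSW_one_eq_zero (hτ : GoodTau τ) : dSW 1 τ z = 0 := by
  have hb₀ : bSW 0 τ z ≠ 0 := div_ne_zero hτ.2.2.1 (by norm_num)
  have hd₁ : dSW 1 τ z = 6 * bSW 0 τ z * t + bSW 1 τ z := by
    simp [dSW, sum_range_succ, mul_comm]
  rw [hd₁, uShift, mul_div_cancel₀ _ (by simpa using hb₀), neg_add_cancel]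

theorem aSW_eq_translate_cSW {i : ℕ} (hi : i ≤ 4) :
    aSW i τ z = translate 4 (-t) (cSW · τ z) i :=
  (translate_neg_translate t (aSW · τ z) hi).symm

theorem bSW_eq_translate_dSW {i : ℕ} (hi : i ≤ 6) :
    bSW i τ z = translate 6 (-t) (dSW · τ z) i :=
  (translate_neg_translate t (bSW · τ z) hi).symm

theorem aSW_two : aSW 2 τ z = c₂ - 6 * c₀ * t ^ 2 := by
  rw [aSW_eq_translate_cSW z (by norm_num)]
  simp only [translate, sum_range_succ, sum_range_zero, cSW_one]
  norm_num [Nat.choose]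
  ring

theorem aSW_three : aSW 3 τ z = c₃ - 2 * c₂ * t + 8 * c₀ * t ^ 3 := by
  rw [aSW_eq_translate_cSW z (by norm_num)]
  simp only [translate, sum_range_succ, sum_range_zero, cSW_one]
  norm_num [Nat.choose]
  ring

theorem aSW_four : aSW 4 τ z = c₄ - c₃ * t + c₂ * t ^ 2 - 3 * c₀ * t ^ 4 := by
  rw [aSW_eq_translate_cSW z (by norm_num)]
  simp only [translate, sum_range_succ, sum_range_zero, cSW_one]
  norm_num [Nat.choose]
  ring

theorem bSW_one (hτ : GoodTau τ) : bSW 1 τ z = -6 * d₀ * t := by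
  rw [bSW_eq_translate_dSW z (by norm_num)]
  simp [translate, sum_range_succ, dSW_one_eq_zero z hτ, mul_comm]

theorem bSW_two (hτ : GoodTau τ) : bSW 2 τ z = d₂ + 15 * d₀ * t ^ 2 := by
  rw [bSW_eq_translate_dSW z (by norm_num)]
  simp only [translate, sum_range_succ, sum_range_zero, dSW_one_eq_zero z hτ]
  norm_num [Nat.choose]
  ring

theorem bSW_three (hτ : GoodTau τ) : bSW 3 τ z = d₃ - 4 * d₂ * t - 20 * d₀ * t ^ 3 := by
  rw [bSW_eq_translate_dSW z (by norm_num)]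
  simp only [translate, sum_range_succ, sum_range_zero, dSW_one_eq_zero z hτ]
  norm_num [Nat.choose]
  ring

theorem bSW_four (hτ : GoodTau τ) :
    bSW 4 τ z = d₄ - 3 * d₃ * t + 6 * d₂ * t ^ 2 + 15 * d₀ * t ^ 4 := by
  rw [bSW_eq_translate_dSW z (by norm_num)]
  simp only [translate, sum_range_succ, sum_range_zero, dSW_one_eq_zero z hτ]
  norm_num [Nat.choose]
  ring

theorem bSW_five (hτ : GoodTau τ) :
    bSW 5 τ z = d₅ - 2 * d₄ * t + 3 * d₃ * t ^ 2 - 4 * d₂ * t ^ 3 - 6 * d₀ * t ^ 5 := by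
  rw [bSW_eq_translate_dSW z (by norm_num)]
  simp only [translate, sum_range_succ, sum_range_zero, dSW_one_eq_zero z hτ]
  norm_num [Nat.choose]
  ring

theorem bSW_six (hτ : GoodTau τ) :
    bSW 6 τ z = d₆ - d₅ * t + d₄ * t ^ 2 - d₃ * t ^ 3 + d₂ * t ^ 4 + d₀ * t ^ 6 := by
  rw [bSW_eq_translate_dSW z (by norm_num)]
  simp only [translate, sum_range_succ, sum_range_zero, dSW_one_eq_zero z hτ]
  norm_num [Nat.choose]
  ring

theorem A1_eq (hτ : GoodTau τ) : A1 τ z = 9 / 2 * c₁ * d₀ := by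
  have hE4 := hτ.2.1
  have h : b1f τ z = _ := bSW_one z hτ
  rw [b1f, div_mul_eq_mul_div, div_eq_iff hE4, E4_eq_cSW_zero z] at h
  rw [cSW_one]
  linear_combination -1 / 4 * h

theorem A2_eq (hτ : GoodTau τ) :
    A2 τ z = (3 * c₀ ^ 2 * c₁ ^ 2 - 8 * Δ * c₂) / 48 := by
  have ⟨_, hE4, _, hΔ⟩ := hτ
  have h : a2f τ z = _ := aSW_two z
  rw [a2f, div_mul_eq_mul_div, div_eq_iff (by simp [hE4, hΔ])] at h
  have lead_ne_zero : 6 * E4 τ ≠ 0 := by simp [hE4]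
  refine mul_left_cancel₀ lead_ne_zero ?_
  simp only [A1_eq z hτ, Dl_eq_cSW_dSW z, E4_eq_cSW_zero z, cSW_one] at h ⊢
  linear_combination -h

theorem B2_eq (hτ : GoodTau τ) :
    B2 τ z = (45 * c₀ * c₁ ^ 2 * d₀ + 48 * Δ * d₂) / 40 := by
  have ⟨_, hE4, _, hΔ⟩ := hτ
  have h : b2f τ z = _ := bSW_two z hτ
  rw [b2f, div_mul_eq_mul_div, div_eq_iff (by simp [hE4, hΔ])] at h
  have lead_ne_zero : 5 * E4 τ ^ 2 ≠ 0 := by simp [hE4]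
  refine mul_left_cancel₀ lead_ne_zero ?_
  simp only [A1_eq z hτ, Dl_eq_cSW_dSW z, E4_eq_cSW_zero z, E6_eq_dSW_zero z, cSW_one] at h ⊢
  linear_combination h

theorem A3_eq (hτ : GoodTau τ) :
    A3 τ z = (21 * c₀ * c₁ ^ 3 * d₀
      - 48 * Δ * (2 * c₀ * d₃ - 2 * c₁ * d₂ - 3 * c₃ * d₀)) / 896 := by
  have ⟨_, hE4, _, hΔ⟩ := hτ
  have ha : a3f τ z = _ := aSW_three z
  have hb : b3f τ z = _ := bSW_three z hτ
  rw [a3f, one_div_mul_eq_div, div_eq_iff (by simp [hE4, hΔ])] at ha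
  rw [b3f, one_div_mul_eq_div, div_eq_iff (by simp [hE4, hΔ])] at hb
  have lead_ne_zero : 7 * 1728 * E4 τ ^ 2 * Δ ≠ 0 := by simp [hE4, hΔ]
  refine mul_left_cancel₀ lead_ne_zero ?_
  simp only [A1_eq z hτ, A2_eq z hτ, B2_eq z hτ, Dl_eq_cSW_dSW z, E4_eq_cSW_zero z,
    E6_eq_dSW_zero z, cSW_one] at ha hb ⊢
  -- `E6` times the first equation minus the second eliminates `B3` and leaves `A3` with the
  -- coefficient `7 * E4 ^ 2 * (E4 ^ 3 - E6 ^ 2)`.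
  linear_combination 216 * d₀ * ha - hb

theorem B3_eq (hτ : GoodTau τ) :
    B3 τ z = (270 * c₁ ^ 3 * d₀ ^ 2
      - 3 * Δ * (8 * c₀ ^ 2 * c₃ - 4 * c₀ * c₁ * c₂ + c₁ ^ 3 - 144 * d₀ * d₃)) / 640 := by
  have ⟨_, hE4, _, hΔ⟩ := hτ
  have h : a3f τ z = _ := aSW_three z
  rw [a3f, one_div_mul_eq_div, div_eq_iff (by simp [hE4, hΔ])] at h
  have lead_ne_zero : 20 * E4 τ ^ 3 ≠ 0 := by simp [hE4]
  refine mul_left_cancel₀ lead_ne_zero ?_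
  simp only [A1_eq z hτ, A2_eq z hτ, A3_eq z hτ, B2_eq z hτ, Dl_eq_cSW_dSW z, E4_eq_cSW_zero z,
    E6_eq_dSW_zero z, cSW_one] at h ⊢
  linear_combination -h

theorem A4_eq (hτ : GoodTau τ) :
    A4 τ z = (9 * c₁ ^ 4 * d₀ ^ 2
      - Δ * (128 * c₀ ^ 2 * c₁ * c₃ - 64 * c₀ ^ 2 * c₂ ^ 2 + 16 * c₀ * c₁ ^ 2 * c₂
        - 768 * c₀ * d₂ ^ 2 - 3 * c₁ ^ 4 - 2304 * c₁ * d₀ * d₃ + 2304 * c₂ * d₀ * d₂)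
      + 512 * Δ ^ 2 * c₄) / 1024 := by
  have ⟨_, hE4, _, hΔ⟩ := hτ
  have h : a4f τ z = _ := aSW_four z
  rw [a4f, one_div_mul_eq_div, div_eq_iff (by simp [hE4, hΔ])] at h
  have lead_ne_zero : 576 * E4 τ ^ 3 * Δ ≠ 0 := by simp [hE4, hΔ]
  refine mul_left_cancel₀ lead_ne_zero ?_
  simp only [A1_eq z hτ, A2_eq z hτ, A3_eq z hτ, B2_eq z hτ, Dl_eq_cSW_dSW z, E4_eq_cSW_zero z,
    E6_eq_dSW_zero z, cSW_one] at h ⊢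
  linear_combination h

theorem B4_eq (hτ : GoodTau τ) :
    B4 τ z = (15 * c₀ ^ 2 * c₁ ^ 4 * d₀
      + 32 * Δ * (12 * c₀ ^ 2 * c₁ * d₃ - 8 * c₀ ^ 2 * c₂ * d₂ - 3 * c₀ * c₁ ^ 2 * d₂
        - 18 * c₀ * c₁ * c₃ * d₀ + 6 * c₀ * c₂ ^ 2 * d₀ - 3 * c₁ ^ 2 * c₂ * d₀
        + 72 * d₀ * d₂ ^ 2)
      - 512 * Δ ^ 2 * d₄) / 2560 := by
  have ⟨_, hE4, _, hΔ⟩ := hτ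
  have h : b4f τ z = _ := bSW_four z hτ
  rw [b4f, one_div_mul_eq_div, div_eq_iff (by simp [hE4, hΔ])] at h
  have lead_ne_zero : 8640 * E4 τ ^ 4 * Δ ≠ 0 := by simp [hE4, hΔ]
  refine mul_left_cancel₀ lead_ne_zero ?_
  simp only [A1_eq z hτ, A2_eq z hτ, B2_eq z hτ, B3_eq z hτ, Dl_eq_cSW_dSW z, E4_eq_cSW_zero z,
    E6_eq_dSW_zero z, cSW_one] at h ⊢
  linear_combination -h

theorem A5_eq (hτ : GoodTau τ) :
    A5 τ z = (21 * c₀ ^ 2 * c₁ ^ 5 * d₀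
      + 32 * Δ * (18 * c₀ ^ 2 * c₁ ^ 2 * d₃ + 24 * c₀ ^ 2 * c₁ * c₂ * d₂
        - 12 * c₀ * c₁ ^ 3 * d₂ + 165 * c₀ * c₁ ^ 2 * c₃ * d₀ - 54 * c₀ * c₁ * c₂ ^ 2 * d₀
        - 7 * c₁ ^ 3 * c₂ * d₀ + 216 * c₁ * d₀ * d₂ ^ 2)
      - 512 * Δ ^ 2 * (8 * c₀ * d₅ - 4 * c₁ * d₄ + 7 * c₂ * d₃ - 11 * c₃ * d₂)) / 172032 := by
  have ⟨_, hE4, _, hΔ⟩ := hτ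
  have h : b5f τ z = _ := bSW_five z hτ
  rw [b5f, one_div_mul_eq_div, div_eq_iff (by simp [hE4, hΔ])] at h
  have lead_ne_zero : 36288 * E4 τ ^ 4 * Δ ≠ 0 := by simp [hE4, hΔ]
  refine mul_left_cancel₀ lead_ne_zero ?_
  simp only [A1_eq z hτ, A2_eq z hτ, A3_eq z hτ, B2_eq z hτ, B3_eq z hτ, Dl_eq_cSW_dSW z,
    E4_eq_cSW_zero z, E6_eq_dSW_zero z, cSW_one] at h ⊢
  linear_combination -h

theorem B6_eq (hτ : GoodTau τ) :
    B6 τ z = (135 * c₁ ^ 6 * d₀ ^ 3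
      + 3 * Δ * (16 * c₀ ^ 2 * c₁ ^ 4 * d₂ + 448 * c₀ ^ 2 * c₁ ^ 3 * c₃ * d₀
        - 192 * c₀ ^ 2 * c₁ ^ 2 * c₂ ^ 2 * d₀ + 16 * c₀ * c₁ ^ 4 * c₂ * d₀
        + 4608 * c₀ * c₁ ^ 2 * d₀ ^ 2 * d₄ - c₁ ^ 6 * d₀ - 2880 * c₁ ^ 3 * d₀ ^ 2 * d₃
        + 2304 * c₁ ^ 2 * c₂ * d₀ ^ 2 * d₂ - 6912 * c₁ ^ 2 * c₄ * d₀ ^ 3)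
      + 64 * Δ ^ 2 * (144 * c₀ ^ 2 * c₁ * d₅ - 64 * c₀ ^ 2 * c₂ * d₄ + 48 * c₀ ^ 2 * c₃ * d₃
        - 96 * c₀ ^ 2 * c₄ * d₂ - 12 * c₀ * c₁ ^ 2 * d₄ + 24 * c₀ * c₁ * c₂ * d₃
        - 24 * c₀ * c₁ * c₃ * d₂ - 8 * c₀ * c₂ ^ 2 * d₂ + 144 * c₀ * c₂ * c₄ * d₀
        - 36 * c₀ * c₃ ^ 2 * d₀ - 3 * c₁ ^ 3 * d₃ - 144 * c₁ ^ 2 * c₄ * d₀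
        - 24 * c₁ * c₂ * c₃ * d₀ + 12 * c₂ ^ 3 * d₀ + 1152 * d₀ * d₂ * d₄ - 432 * d₀ * d₃ ^ 2)
      - 36864 * Δ ^ 3 * d₆) / 163840 := by
  have ⟨_, hE4, _, hΔ⟩ := hτ
  have h : b6f τ z = _ := bSW_six z hτ
  rw [b6f, one_div_mul_eq_div, div_eq_iff (by simp [hE4, hΔ])] at h
  have lead_ne_zero : 19906560 * E4 τ ^ 6 * Δ ^ 2 ≠ 0 := by simp [hE4, hΔ]
  refine mul_left_cancel₀ lead_ne_zero ?_
  simp only [A1_eq z hτ, A2_eq z hτ, A3_eq z hτ, A4_eq z hτ, A5_eq z hτ, B2_eq z hτ, B3_eq z hτ,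
    B4_eq z hτ, Dl_eq_cSW_dSW z, E4_eq_cSW_zero z, E6_eq_dSW_zero z, cSW_one] at h ⊢
  linear_combination -h

end Coefficients

namespace MemRt

variable {φ ψ : ℂ → (Fin 8 → ℂ) → ℂ}

theorem congr (hψ : MemRt ψ) (h : ∀ τ, GoodTau τ → ∀ z, φ τ z = ψ τ z) : MemRt φ :=
  hψ.imp fun _ hP τ hτ z => (h τ hτ z).trans (hP τ hτ z)

theorem generator (i : Fin 11) : MemRt (cdGens i) :=
  ⟨.X i, by simp⟩

theorem const (a : ℂ) : MemRt fun _ _ => a :=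
  ⟨.C a, by simp⟩

theorem add (hφ : MemRt φ) (hψ : MemRt ψ) : MemRt fun τ z => φ τ z + ψ τ z := by
  obtain ⟨P, hP⟩ := hφ
  obtain ⟨Q, hQ⟩ := hψ
  exact ⟨P + Q, fun τ hτ z => by simp only [hP τ hτ, hQ τ hτ, map_add]⟩

theorem mul (hφ : MemRt φ) (hψ : MemRt ψ) : MemRt fun τ z => φ τ z * ψ τ z := by
  obtain ⟨P, hP⟩ := hφ
  obtain ⟨Q, hQ⟩ := hψ
  exact ⟨P * Q, fun τ hτ z => by simp only [hP τ hτ, hQ τ hτ, map_mul]⟩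

theorem sub (hφ : MemRt φ) (hψ : MemRt ψ) : MemRt fun τ z => φ τ z - ψ τ z := by
  obtain ⟨P, hP⟩ := hφ
  obtain ⟨Q, hQ⟩ := hψ
  exact ⟨P - Q, fun τ hτ z => by simp only [hP τ hτ, hQ τ hτ, map_sub]⟩

theorem pow (hφ : MemRt φ) (n : ℕ) : MemRt fun τ z => φ τ z ^ n := by
  obtain ⟨P, hP⟩ := hφ
  exact ⟨P ^ n, fun τ hτ z => by simp only [hP τ hτ, map_pow]⟩

theorem div_const (hφ : MemRt φ) (a : ℂ) : MemRt fun τ z => φ τ z / a := by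
  simpa only [div_eq_mul_inv] using hφ.mul (const a⁻¹)

theorem discriminant : MemRt fun τ _ => Dl τ :=
  (((generator 0).pow 3).sub ((const 27).mul ((generator 5).pow 2))).congr
    fun _ _ z => Dl_eq_cSW_dSW z

end MemRt

theorem memRt_nineForms (i : Fin 9) : MemRt (nineForms i) := by
  have hc₀ : MemRt (cSW 0) := .generator 0
  have hc₁ : MemRt (cSW 1) := .generator 1
  have hc₂ : MemRt (cSW 2) := .generator 2
  have hc₃ : MemRt (cSW 3) := .generator 3
  have hc₄ : MemRt (cSW 4) := .generator 4
  have hd₀ : MemRt (dSW 0) := .generator 5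
  have hd₂ : MemRt (dSW 2) := .generator 6
  have hd₃ : MemRt (dSW 3) := .generator 7
  have hd₄ : MemRt (dSW 4) := .generator 8
  have hd₅ : MemRt (dSW 5) := .generator 9
  have hd₆ : MemRt (dSW 6) := .generator 10
  fin_cases i <;> [
    refine .congr ?_ fun _ hτ z => A1_eq z hτ;
    refine .congr ?_ fun _ hτ z => A2_eq z hτ;
    refine .congr ?_ fun _ hτ z => A3_eq z hτ;
    refine .congr ?_ fun _ hτ z => A4_eq z hτ;
    refine .congr ?_ fun _ hτ z => A5_eq z hτ;
    refine .congr ?_ fun _ hτ z => B2_eq z hτ;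
    refine .congr ?_ fun _ hτ z => B3_eq z hτ;
    refine .congr ?_ fun _ hτ z => B4_eq z hτ;
    refine .congr ?_ fun _ hτ z => B6_eq z hτ]
  all_goals
    repeat' with_reducible first
      | assumption
      | apply MemRt.discriminant
      | apply MemRt.const
      | apply MemRt.pow
      | apply MemRt.div_const
      | apply MemRt.mul
      | apply MemRt.add
      | apply MemRt.sub

/-- The nine basic holomorphic Jacobi forms are polynomials in
c_0, …, c_4, d_0, d_2, …, d_6; explicitly A_1 = (9/2)c_1d_0,
A_2 = (3c_0²c_1² − 8Δc_2)/48, B_2 = (45c_0c_1²d_0 + 48Δd_2)/40 and Δ = c_0³ − 27d_0². -/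
theorem nineForms_in_Rt :
    (∀ i : Fin 9, MemRt (nineForms i)) ∧
    (∀ τ : ℂ, GoodTau τ → ∀ z : Fin 8 → ℂ,
      A1 τ z = (9/2) * cSW 1 τ z * dSW 0 τ z ∧
      A2 τ z = (3 * cSW 0 τ z ^ 2 * cSW 1 τ z ^ 2 - 8 * Dl τ * cSW 2 τ z) / 48 ∧
      B2 τ z = (45 * cSW 0 τ z * cSW 1 τ z ^ 2 * dSW 0 τ z + 48 * Dl τ * dSW 2 τ z) / 40 ∧
      Dl τ = cSW 0 τ z ^ 3 - 27 * dSW 0 τ z ^ 2) :=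
  ⟨memRt_nineForms, fun _ hτ z => ⟨A1_eq z hτ, A2_eq z hτ, B2_eq z hτ, Dl_eq_cSW_dSW z⟩⟩

end E8Jacobi
end
end

section
/- Let P_{16,5} = 864A_1³A_2 + 3825A_1B_2² − 770E_6A_3B_2 − 840E_6A_2B_3 + 60E_6A_1B_4 + 21E_6²A_5. Then, as meromorphic functions on ℍ × ℂ^8, P_{16,5} = E4 · Q, where Q = −(27 d_0/128)·(−7110 c_0 c_1⁵ d_0² + 140Δ c_0² c_1³ c_2 − 21Δ c_0 c_1⁵ − 1344Δ c_0² c_1 d_2² − 9648Δ c_0 c_1² d_0 d_3 + 576Δ c_0 c_1 c_2 d_0 d_2 − 6864Δ c_1³ d_0 d_2 + 648Δ c_1² c_3 d_0² + 2160Δ c_1 c_2² d_0² + 448Δ² c_0 c_2 c_3 − 168Δ² c_1² c_3 − 224Δ² c_1 c_2² + 9216Δ² d_0 d_5 − 8448Δ² d_2 d_3) with Δ = c_0³ − 27 d_0²; in particular P_{16,5}/E4 is a polynomial in c_0, c_1, c_2, c_3, d_0, d_2, d_3, d_5. -/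
noncomputable section

open Complex Finset

namespace E8Jacobi

/-- The holomorphic Jacobi form P_{16,5} of weight 16 and index 5. -/
def P165 (τ : ℂ) (z : Fin 8 → ℂ) : ℂ :=
  864 * A1 τ z ^ 3 * A2 τ z + 3825 * A1 τ z * B2 τ z ^ 2
    - 770 * E6 τ * A3 τ z * B2 τ z - 840 * E6 τ * A2 τ z * B3 τ z
    + 60 * E6 τ * A1 τ z * B4 τ z + 21 * E6 τ ^ 2 * A5 τ z

/-- The explicit polynomial expression of P_{16,5}/E4 in the c_i, d_j. -/
def Qcd (τ : ℂ) (z : Fin 8 → ℂ) : ℂ :=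
  -(27 * dSW 0 τ z / 128) *
    (-7110 * cSW 0 τ z * cSW 1 τ z ^ 5 * dSW 0 τ z ^ 2
      + 140 * (cSW 0 τ z ^ 3 - 27 * dSW 0 τ z ^ 2) * cSW 0 τ z ^ 2 * cSW 1 τ z ^ 3 * cSW 2 τ z
      - 21 * (cSW 0 τ z ^ 3 - 27 * dSW 0 τ z ^ 2) * cSW 0 τ z * cSW 1 τ z ^ 5
      - 1344 * (cSW 0 τ z ^ 3 - 27 * dSW 0 τ z ^ 2) * cSW 0 τ z ^ 2 * cSW 1 τ z * dSW 2 τ z ^ 2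
      - 9648 * (cSW 0 τ z ^ 3 - 27 * dSW 0 τ z ^ 2) * cSW 0 τ z * cSW 1 τ z ^ 2 * dSW 0 τ z * dSW 3 τ z
      + 576 * (cSW 0 τ z ^ 3 - 27 * dSW 0 τ z ^ 2) * cSW 0 τ z * cSW 1 τ z * cSW 2 τ z * dSW 0 τ z * dSW 2 τ z
      - 6864 * (cSW 0 τ z ^ 3 - 27 * dSW 0 τ z ^ 2) * cSW 1 τ z ^ 3 * dSW 0 τ z * dSW 2 τ z
      + 648 * (cSW 0 τ z ^ 3 - 27 * dSW 0 τ z ^ 2) * cSW 1 τ z ^ 2 * cSW 3 τ z * dSW 0 τ z ^ 2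
      + 2160 * (cSW 0 τ z ^ 3 - 27 * dSW 0 τ z ^ 2) * cSW 1 τ z * cSW 2 τ z ^ 2 * dSW 0 τ z ^ 2
      + 448 * (cSW 0 τ z ^ 3 - 27 * dSW 0 τ z ^ 2) ^ 2 * cSW 0 τ z * cSW 2 τ z * cSW 3 τ z
      - 168 * (cSW 0 τ z ^ 3 - 27 * dSW 0 τ z ^ 2) ^ 2 * cSW 1 τ z ^ 2 * cSW 3 τ z
      - 224 * (cSW 0 τ z ^ 3 - 27 * dSW 0 τ z ^ 2) ^ 2 * cSW 1 τ z * cSW 2 τ z ^ 2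
      + 9216 * (cSW 0 τ z ^ 3 - 27 * dSW 0 τ z ^ 2) ^ 2 * dSW 0 τ z * dSW 5 τ z
      - 8448 * (cSW 0 τ z ^ 3 - 27 * dSW 0 τ z ^ 2) ^ 2 * dSW 2 τ z * dSW 3 τ z)

/-!
The definitions of the `a_i, b_j` form a triangular system for the basic Jacobi forms, and solving
it expresses the forms occurring in `P_{16,5}` as polynomials in the `a_i, b_j, Δ`. The only step
that is not immediate is the pair `A_3, B_3`, which occurs linearly in `a_3, b_3` with determinant
proportional to `E4 ^ 3 - E6 ^ 2 = 1728 Δ`. After substituting these polynomials, and using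
`Δ = a_0 ^ 3 - 27 b_0 ^ 2`, `P_{16,5}` becomes divisible by `a_0 = E4 / 12`.
The `c_i, d_j` are the coefficients of the same quartic and sextic after the translation
`u ↦ u - b_1 / (6 b_0)`; expanding them in the `a_i, b_j` turns the stated quotient into the one
found.
-/

lemma E4_eq_aSW_zero (τ : ℂ) (z : Fin 8 → ℂ) : E4 τ = 12 * aSW 0 τ z := by
  simp only [aSW, a0f]
  ring

lemma E6_eq_bSW_zero (τ : ℂ) (z : Fin 8 → ℂ) : E6 τ = 216 * bSW 0 τ z := by
  simp only [bSW, b0f]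
  ring

lemma Dl_eq_aSW_bSW (τ : ℂ) (z : Fin 8 → ℂ) :
    Dl τ = aSW 0 τ z ^ 3 - 27 * bSW 0 τ z ^ 2 := by
  simp only [Dl, aSW, bSW, a0f, b0f]
  ring

section SeibergWittenCoefficients

variable {τ : ℂ} (hE4 : E4 τ ≠ 0) (hDl : Dl τ ≠ 0) (z : Fin 8 → ℂ)

include hE4

lemma A1_eq_aSW_bSW : A1 τ z = -3 * aSW 0 τ z * bSW 1 τ z := by
  simp only [aSW, bSW, a0f, b1f]
  field_simp
  ring

include hDl

lemma A2_eq_aSW_bSW :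
    A2 τ z = 3 / 4 * aSW 0 τ z * bSW 1 τ z ^ 2 - 1 / 6 * Dl τ * aSW 2 τ z := by
  simp only [aSW, bSW, a0f, a2f, b1f]
  field_simp
  ring

lemma B2_eq_aSW_bSW :
    B2 τ z = 27 / 2 * bSW 0 τ z * bSW 1 τ z ^ 2 + 6 / 5 * Dl τ * bSW 2 τ z := by
  simp only [bSW, b0f, b1f, b2f]
  field_simp
  ring

lemma A3_eq_aSW_bSW :
    A3 τ z = -(3 / 16) * aSW 0 τ z * bSW 1 τ z ^ 3
      - 3 / 56 * Dl τ * (2 * aSW 0 τ z * bSW 3 τ z + aSW 2 τ z * bSW 1 τ z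
        - 3 * aSW 3 τ z * bSW 0 τ z) := by
  simp only [aSW, bSW, a0f, a2f, a3f, b0f, b1f, b3f]
  field_simp
  simp only [Dl]
  ring

lemma B3_eq_aSW_bSW :
    B3 τ z = -(27 / 8) * bSW 0 τ z * bSW 1 τ z ^ 3
      - 3 / 80 * Dl τ * (aSW 0 τ z ^ 2 * aSW 3 τ z - 18 * bSW 0 τ z * bSW 3 τ z
        + 12 * bSW 1 τ z * bSW 2 τ z) := by
  simp only [aSW, bSW, a0f, a3f, b0f, b1f, b2f, b3f]
  field_simp
  simp only [Dl]
  ring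

lemma B4_eq_aSW_bSW :
    B4 τ z = 27 / 32 * bSW 0 τ z * bSW 1 τ z ^ 4
      + Dl τ / 40 * (-4 * aSW 0 τ z ^ 2 * aSW 2 τ z * bSW 2 τ z
        + 6 * aSW 0 τ z ^ 2 * aSW 3 τ z * bSW 1 τ z
        + 3 * aSW 0 τ z * aSW 2 τ z ^ 2 * bSW 0 τ z
        - 108 * bSW 0 τ z * bSW 1 τ z * bSW 3 τ z + 36 * bSW 0 τ z * bSW 2 τ z ^ 2
        + 6 * bSW 1 τ z ^ 2 * bSW 2 τ z)
      - Dl τ ^ 2 / 5 * bSW 4 τ z := by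
  simp only [aSW, bSW, a0f, a2f, a3f, b0f, b1f, b2f, b3f, b4f]
  field_simp
  simp only [Dl]
  ring

lemma A5_eq_aSW_bSW :
    A5 τ z = -(3 / 256) * aSW 0 τ z * bSW 1 τ z ^ 5
      + Dl τ / 1344 * (9 * aSW 0 τ z ^ 2 * aSW 2 τ z ^ 2 * bSW 1 τ z
        + 54 * aSW 0 τ z * bSW 1 τ z ^ 2 * bSW 3 τ z
        - 36 * aSW 0 τ z * bSW 1 τ z * bSW 2 τ z ^ 2
        - 108 * aSW 2 τ z * bSW 0 τ z * bSW 1 τ z * bSW 2 τ z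
        - 25 * aSW 2 τ z * bSW 1 τ z ^ 3 + 495 * aSW 3 τ z * bSW 0 τ z * bSW 1 τ z ^ 2)
      - Dl τ ^ 2 / 336 * (8 * aSW 0 τ z * bSW 5 τ z + 7 * aSW 2 τ z * bSW 3 τ z
        - 11 * aSW 3 τ z * bSW 2 τ z) := by
  simp only [aSW, bSW, a0f, a2f, a3f, b0f, b1f, b2f, b3f, b5f]
  field_simp
  simp only [Dl]
  ring

/-- The quotient `P_{16,5} / E4` written in the coefficients `a_i, b_j` of the untranslated curve,
the counterpart of `Qcd`. The occurrences of `Dl τ` stand for `a_0 ^ 3 - 27 b_0 ^ 2`. -/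
def Qab (τ : ℂ) (z : Fin 8 → ℂ) : ℂ :=
  27 / 4 *
    (-21330 * bSW 0 τ z ^ 2 * bSW 1 τ z ^ 5
      + Dl τ * (-216 * bSW 1 τ z ^ 5 + 45 * aSW 0 τ z * aSW 2 τ z ^ 2 * bSW 0 τ z ^ 2 * bSW 1 τ z
        + 3618 * bSW 0 τ z ^ 2 * bSW 1 τ z ^ 2 * bSW 3 τ z
        - 756 * bSW 0 τ z ^ 2 * bSW 1 τ z * bSW 2 τ z ^ 2
        - 3444 * bSW 0 τ z * bSW 1 τ z ^ 3 * bSW 2 τ z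
        + 12 * aSW 0 τ z ^ 2 * aSW 2 τ z * bSW 0 τ z * bSW 1 τ z * bSW 2 τ z
        + 48 * aSW 0 τ z ^ 2 * aSW 2 τ z * bSW 1 τ z ^ 3
        - 9 * aSW 0 τ z ^ 2 * aSW 3 τ z * bSW 0 τ z * bSW 1 τ z ^ 2)
      + Dl τ ^ 2 * (-14 * aSW 0 τ z * aSW 2 τ z * aSW 3 τ z * bSW 0 τ z
        - 204 * bSW 1 τ z * bSW 2 τ z ^ 2 - 288 * bSW 0 τ z ^ 2 * bSW 5 τ z
        + 96 * bSW 0 τ z * bSW 1 τ z * bSW 4 τ z + 264 * bSW 0 τ z * bSW 2 τ z * bSW 3 τ z))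

lemma P165_eq_E4_mul_Qab : P165 τ z = E4 τ * Qab τ z := by
  rw [P165, Qab, A1_eq_aSW_bSW hE4, A2_eq_aSW_bSW hE4 hDl, A3_eq_aSW_bSW hE4 hDl,
    A5_eq_aSW_bSW hE4 hDl, B2_eq_aSW_bSW hE4 hDl, B3_eq_aSW_bSW hE4 hDl, B4_eq_aSW_bSW hE4 hDl,
    E4_eq_aSW_zero τ z, E6_eq_bSW_zero τ z, Dl_eq_aSW_bSW τ z]
  ring

end SeibergWittenCoefficients

section TranslatedCoefficients

variable (τ : ℂ) (z : Fin 8 → ℂ)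

lemma cSW_zero : cSW 0 τ z = aSW 0 τ z := by simp [cSW]

lemma cSW_one_s19 : cSW 1 τ z = 4 * aSW 0 τ z * uShift τ z := by
  simp only [cSW, sum_range_succ, range_zero, sum_empty, aSW, Nat.reduceAdd, Nat.reduceSub,
    Nat.choose, Nat.cast_ofNat, Nat.cast_one]
  ring

lemma cSW_two : cSW 2 τ z = 6 * aSW 0 τ z * uShift τ z ^ 2 + aSW 2 τ z := by
  simp only [cSW, sum_range_succ, range_zero, sum_empty, aSW, Nat.reduceAdd, Nat.reduceSub,
    Nat.choose, Nat.cast_ofNat, Nat.cast_one]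
  ring

lemma cSW_three :
    cSW 3 τ z = 4 * aSW 0 τ z * uShift τ z ^ 3 + 2 * aSW 2 τ z * uShift τ z + aSW 3 τ z := by
  simp only [cSW, sum_range_succ, range_zero, sum_empty, aSW, Nat.reduceAdd, Nat.reduceSub,
    Nat.choose, Nat.cast_ofNat, Nat.cast_one]
  ring

lemma dSW_zero : dSW 0 τ z = bSW 0 τ z := by simp [dSW]

lemma dSW_two :
    dSW 2 τ z = 15 * bSW 0 τ z * uShift τ z ^ 2 + 5 * bSW 1 τ z * uShift τ z + bSW 2 τ z := by
  simp only [dSW, sum_range_succ, range_zero, sum_empty, Nat.reduceAdd, Nat.reduceSub,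
    Nat.choose, Nat.cast_ofNat, Nat.cast_one]
  ring

lemma dSW_three :
    dSW 3 τ z = 20 * bSW 0 τ z * uShift τ z ^ 3 + 10 * bSW 1 τ z * uShift τ z ^ 2
      + 4 * bSW 2 τ z * uShift τ z + bSW 3 τ z := by
  simp only [dSW, sum_range_succ, range_zero, sum_empty, Nat.reduceAdd, Nat.reduceSub,
    Nat.choose, Nat.cast_ofNat, Nat.cast_one]
  ring

lemma dSW_five :
    dSW 5 τ z = 6 * bSW 0 τ z * uShift τ z ^ 5 + 5 * bSW 1 τ z * uShift τ z ^ 4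
      + 4 * bSW 2 τ z * uShift τ z ^ 3 + 3 * bSW 3 τ z * uShift τ z ^ 2
      + 2 * bSW 4 τ z * uShift τ z + bSW 5 τ z := by
  simp only [dSW, sum_range_succ, range_zero, sum_empty, Nat.reduceAdd, Nat.reduceSub,
    Nat.choose, Nat.cast_ofNat, Nat.cast_one]
  ring

end TranslatedCoefficients

lemma bSW_one_eq_uShift {τ : ℂ} (hE6 : E6 τ ≠ 0) (z : Fin 8 → ℂ) :
    bSW 1 τ z = -6 * bSW 0 τ z * uShift τ z := by
  have hb0 : bSW 0 τ z ≠ 0 := by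
    rw [E6_eq_bSW_zero τ z] at hE6
    exact right_ne_zero_of_mul hE6
  rw [uShift]
  field_simp

lemma Qab_eq_Qcd {τ : ℂ} (hE6 : E6 τ ≠ 0) (z : Fin 8 → ℂ) : Qab τ z = Qcd τ z := by
  rw [Qab, Qcd, Dl_eq_aSW_bSW τ z]
  simp only [cSW_zero, cSW_one_s19, cSW_two, cSW_three, dSW_zero, dSW_two, dSW_three, dSW_five,
    bSW_one_eq_uShift hE6]
  ring

lemma P165_eq_E4_mul_Qcd {τ : ℂ} (hE4 : E4 τ ≠ 0) (hE6 : E6 τ ≠ 0) (hDl : Dl τ ≠ 0)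
    (z : Fin 8 → ℂ) : P165 τ z = E4 τ * Qcd τ z := by
  rw [P165_eq_E4_mul_Qab hE4 hDl, Qab_eq_Qcd hE6]

open MvPolynomial in
/-- `Qcd` as a formal polynomial; the variables `X 0, …, X 7` stand for
`c_0, c_1, c_2, c_3, d_0, d_2, d_3, d_5` in this order. -/
def QcdPoly : MvPolynomial (Fin 8) ℂ :=
  let c₀ := X 0
  let c₁ := X 1
  let c₂ := X 2
  let c₃ := X 3
  let d₀ := X 4
  let d₂ := X 5
  let d₃ := X 6
  let d₅ := X 7
  let δ := c₀ ^ 3 - 27 * d₀ ^ 2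
  C (-(27 / 128)) * d₀ *
    (-7110 * c₀ * c₁ ^ 5 * d₀ ^ 2
      + δ * (140 * c₀ ^ 2 * c₁ ^ 3 * c₂ - 21 * c₀ * c₁ ^ 5 - 1344 * c₀ ^ 2 * c₁ * d₂ ^ 2
        - 9648 * c₀ * c₁ ^ 2 * d₀ * d₃ + 576 * c₀ * c₁ * c₂ * d₀ * d₂
        - 6864 * c₁ ^ 3 * d₀ * d₂ + 648 * c₁ ^ 2 * c₃ * d₀ ^ 2 + 2160 * c₁ * c₂ ^ 2 * d₀ ^ 2)
      + δ ^ 2 * (448 * c₀ * c₂ * c₃ - 168 * c₁ ^ 2 * c₃ - 224 * c₁ * c₂ ^ 2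
        + 9216 * d₀ * d₅ - 8448 * d₂ * d₃))

lemma eval_QcdPoly (τ : ℂ) (z : Fin 8 → ℂ) :
    MvPolynomial.eval
      (fun i => ![cSW 0, cSW 1, cSW 2, cSW 3, dSW 0, dSW 2, dSW 3, dSW 5] i τ z) QcdPoly
      = Qcd τ z := by
  simp only [QcdPoly, Qcd, map_mul, map_add, map_sub, map_neg, map_pow, map_ofNat,
    MvPolynomial.eval_X, MvPolynomial.eval_C, Matrix.cons_val]
  ring

/-- P_{16,5} = E4 · Q with Q the explicit polynomial in the c_i, d_j above;
in particular P_{16,5}/E4 is a polynomial in c_0, c_1, c_2, c_3, d_0, d_2, d_3, d_5. -/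
theorem P165_div_E4_polynomial :
    (∀ τ : ℂ, GoodTau τ → ∀ z : Fin 8 → ℂ, P165 τ z = E4 τ * Qcd τ z) ∧
    ∃ Q' : MvPolynomial (Fin 8) ℂ, ∀ τ : ℂ, GoodTau τ → ∀ z : Fin 8 → ℂ,
      P165 τ z / E4 τ =
        MvPolynomial.eval
          (fun i => ![cSW 0, cSW 1, cSW 2, cSW 3, dSW 0, dSW 2, dSW 3, dSW 5] i τ z) Q' := by
  have hP : ∀ τ : ℂ, GoodTau τ → ∀ z : Fin 8 → ℂ, P165 τ z = E4 τ * Qcd τ z :=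
    fun τ ⟨_, hE4, hE6, hDl⟩ z => P165_eq_E4_mul_Qcd hE4 hE6 hDl z
  refine ⟨hP, QcdPoly, fun τ hτ z => ?_⟩
  rw [eval_QcdPoly, hP τ hτ z, mul_div_cancel_left₀ _ hτ.2.1]

end E8Jacobi
end
end
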